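/- There is no infinite sequence E0, E1, E2, … of finite equation sets such that for every i, E_{i+1} is obtained from E_i by an action of MMA⁻; equivalently, MMA⁻ terminates on every finite input equation set. -/

import Mathlib

/-- Finite first-order terms: variables and function applications.
A function symbol is identified by its name together with the number of
arguments it is applied to (fixed arity). -/
inductive Trm : Type where
  | var : ℕ → Trm
  | fn  : ℕ → List Trm → Trm

namespace Trm

/-- `|t|`: the number of occurrences of variables and function symbols
(including constants) in the term `t`. -/
def size : Trm → ℕ
  | .var _ => 1
  | .fn _ ts => 1 + (ts.attach.map (fun ⟨t, _⟩ => size t)).sum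
decreasing_by
  have := List.sizeOf_lt_of_mem ‹_ ∈ ts›
  simp [Trm.fn.sizeOf_spec]; omega

/-- Application of a substitution (a map from variables to terms) to a term. -/
def subst (σ : ℕ → Trm) : Trm → Trm
  | .var x => σ x
  | .fn f ts => .fn f (ts.attach.map (fun ⟨t, _⟩ => subst σ t))
decreasing_by
  have := List.sizeOf_lt_of_mem ‹_ ∈ ts›
  simp [Trm.fn.sizeOf_spec]; omega

/-- The number of occurrences of the variable `x` in a term. -/
def count (x : ℕ) : Trm → ℕ
  | .var y => if y = x then 1 else 0
  | .fn _ ts => (ts.attach.map (fun ⟨t, _⟩ => count x t)).sum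
decreasing_by
  have := List.sizeOf_lt_of_mem ‹_ ∈ ts›
  simp [Trm.fn.sizeOf_spec]; omega

/-- `Occurs x t` : the variable `x` occurs in the term `t`. -/
inductive Occurs (x : ℕ) : Trm → Prop where
  | var : Occurs x (.var x)
  | fn {f : ℕ} {ts : List Trm} {t : Trm} : t ∈ ts → Occurs x t → Occurs x (.fn f ts)

end Trm

/-- The set of variables occurring in a term. -/
def varSet (t : Trm) : Set ℕ := {x | Trm.Occurs x t}

/-- The set of variables occurring in a list (tuple) of terms. -/
def varsL (l : List Trm) : Set ℕ := {x | ∃ t ∈ l, Trm.Occurs x t}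

/-- The number of occurrences of a variable in a list (tuple) of terms. -/
def countL (x : ℕ) (l : List Trm) : ℕ := (l.map (Trm.count x)).sum

/-- A term is ground if no variable occurs in it. -/
def Ground (t : Trm) : Prop := ∀ x, ¬ Trm.Occurs x t

/-- An equation set: a set of equations `s ≐ t` between terms,
represented as pairs of terms. -/
abbrev EqSet := Set (Trm × Trm)

/-- `σ` is a solution (unifier) of the equation set `E`. -/
def Solves (σ : ℕ → Trm) (E : EqSet) : Prop :=
  ∀ e ∈ E, Trm.subst σ e.1 = Trm.subst σ e.2

/-- `E` is unifiable: it has a unifier. -/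
def Unifiable (E : EqSet) : Prop := ∃ σ, Solves σ E

/-- `θ` is a most general unifier of `E`. -/
def IsMgu (θ : ℕ → Trm) (E : EqSet) : Prop :=
  Solves θ E ∧ ∀ σ, Solves σ E → ∃ ρ, ∀ x, σ x = Trm.subst ρ (θ x)

/-- The equation set `s ≐̈ t` pairing corresponding members of two
equal-length tuples of terms. -/
def zipEqs (s t : List Trm) : EqSet := {e | e ∈ s.zip t}

/-- The substitution `{X/t}` mapping `X` to `t` and every other variable
to itself. -/
def single (X : ℕ) (t : Trm) : ℕ → Trm :=
  fun y => if y = X then t else .var y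

/-- The equation set `Eθ`: the substitution applied to both sides of
every equation of `E`. -/
def substE (θ : ℕ → Trm) (E : EqSet) : EqSet :=
  (fun e => (Trm.subst θ e.1, Trm.subst θ e.2)) '' E

/-- One step of the Martelli–Montanari algorithm MMA: actions (1), (3), (4),
(5).  (Actions (2) and (6) halt with failure and produce no next equation
set; their applicability is captured by `ClashApp` and `OccApp` below.)
Two function applications carry the same function symbol iff they have the
same name and the same number of arguments (fixed arity). -/
inductive MMAStep : EqSet → EqSet → Prop where
  /-- Action (1): replace `f(s1,…,sn) ≐ f(t1,…,tn)` by `s1 ≐ t1, …, sn ≐ tn`. -/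
  | decomp {E : EqSet} {f : ℕ} {sl tl : List Trm} :
      (Trm.fn f sl, Trm.fn f tl) ∈ E → sl.length = tl.length →
      MMAStep E ((E \ {(Trm.fn f sl, Trm.fn f tl)}) ∪ {e | e ∈ sl.zip tl})
  /-- Action (3): delete an equation `X ≐ X`. -/
  | delete {E : EqSet} {x : ℕ} :
      (Trm.var x, Trm.var x) ∈ E →
      MMAStep E (E \ {(Trm.var x, Trm.var x)})
  /-- Action (4): replace `t ≐ X` (`t` not a variable) by `X ≐ t`. -/
  | flip {E : EqSet} {t : Trm} {x : ℕ} :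
      (t, Trm.var x) ∈ E → (∀ y, t ≠ Trm.var y) →
      MMAStep E ((E \ {(t, Trm.var x)}) ∪ {(Trm.var x, t)})
  /-- Action (5): on `X ≐ t` with `X ∉ Var(t)` and `X` occurring elsewhere,
  apply `{X/t}` to all other equations. -/
  | elim {E : EqSet} {x : ℕ} {t : Trm} :
      (Trm.var x, t) ∈ E → ¬ Trm.Occurs x t →
      (∃ e ∈ E \ {(Trm.var x, t)}, Trm.Occurs x e.1 ∨ Trm.Occurs x e.2) →
      MMAStep E ({(Trm.var x, t)} ∪ substE (single x t) (E \ {(Trm.var x, t)}))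

/-- Action (2) is applicable to `E`: `E` contains an equation
`f(s1,…,sn) ≐ g(t1,…,tm)` where the two function symbols differ. -/
def ClashApp (E : EqSet) : Prop :=
  ∃ f sl g tl, (Trm.fn f sl, Trm.fn g tl) ∈ E ∧
    (f ≠ g ∨ sl.length ≠ tl.length)

/-- Action (6) (the occur-check) is applicable to `E`: `E` contains an
equation `X ≐ t` with `X ∈ Var(t)` and `X ≠ t`. -/
def OccApp (E : EqSet) : Prop :=
  ∃ x t, (Trm.var x, t) ∈ E ∧ Trm.Occurs x t ∧ t ≠ Trm.var x

/-- One step of the algorithm MMA⁻ (MMA without the occur-check):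
actions (1), (3), (4), (5a), (5b). -/
inductive MMAmStep : EqSet → EqSet → Prop where
  /-- Action (1). -/
  | decomp {E : EqSet} {f : ℕ} {sl tl : List Trm} :
      (Trm.fn f sl, Trm.fn f tl) ∈ E → sl.length = tl.length →
      MMAmStep E ((E \ {(Trm.fn f sl, Trm.fn f tl)}) ∪ {e | e ∈ sl.zip tl})
  /-- Action (3). -/
  | delete {E : EqSet} {x : ℕ} :
      (Trm.var x, Trm.var x) ∈ E →
      MMAmStep E (E \ {(Trm.var x, Trm.var x)})
  /-- Action (4). -/
  | flip {E : EqSet} {t : Trm} {x : ℕ} :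
      (t, Trm.var x) ∈ E → (∀ y, t ≠ Trm.var y) →
      MMAmStep E ((E \ {(t, Trm.var x)}) ∪ {(Trm.var x, t)})
  /-- Action (5a): on `X ≐ Y` with `X, Y` distinct variables and `X`
  occurring elsewhere, apply `{X/Y}` to all other equations. -/
  | elimVar {E : EqSet} {x y : ℕ} :
      (Trm.var x, Trm.var y) ∈ E → x ≠ y →
      (∃ e ∈ E \ {(Trm.var x, Trm.var y)}, Trm.Occurs x e.1 ∨ Trm.Occurs x e.2) →
      MMAmStep E
        ({(Trm.var x, Trm.var y)} ∪
          substE (single x (Trm.var y)) (E \ {(Trm.var x, Trm.var y)}))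
  /-- Action (5b): on `X ≐ t`, `X ≐ u` with `t, u` distinct non-variable
  terms and `|t| ≤ |u|`, replace `X ≐ u` by `t ≐ u`. -/
  | merge {E : EqSet} {x : ℕ} {t u : Trm} :
      (Trm.var x, t) ∈ E → (Trm.var x, u) ∈ E → t ≠ u →
      (∀ y, t ≠ Trm.var y) → (∀ y, u ≠ Trm.var y) → t.size ≤ u.size →
      MMAmStep E ((E \ {(Trm.var x, u)}) ∪ {(t, u)})

/-- `F` is reachable from `E` by (non-failing) actions of MMA. -/
def Reachable (E F : EqSet) : Prop := Relation.ReflTransGen MMAStep E F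

/-- `E` is NSTO: no run of MMA on `E` performs action (6), i.e. the
occur-check action is never applicable along any run. -/
def NSTO (E : EqSet) : Prop := ∀ F, Reachable E F → ¬ OccApp F

/-- `E` is WNSTO: there exists an occur-check free run of MMA on `E`, i.e. a
maximal run that either halts with failure by action (2), or ends with an
equation set to which no action (including (2) and (6)) applies — without
ever performing action (6). -/
def WNSTO (E : EqSet) : Prop :=
  ∃ F, Reachable E F ∧
    (ClashApp F ∨ (¬ ClashApp F ∧ ¬ OccApp F ∧ ∀ F', ¬ MMAStep F F'))

/-!
Call a variable eliminated if it occurs in no equation, or only in a single equation `X ≐ Y` as its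
left-hand side. The variables of a new equation introduced by (1), (4) or (5b) already occurred in
an equation with a non-variable side, so no action revives an eliminated variable, whereas (5a)
eliminates one more. Every other action replaces an equation by finitely many ones of smaller rank,
where equations are ranked by the size of the larger side and then by orientation. In (5b) this is
what the requirement `|t| ≤ |u|` ensures: `t ≐ u` is no larger than `X ≐ u`. Hence the number of
non-eliminated variables, followed by the multiset of ranks, decreases lexicographically.
-/

theorem isDershowitzMannaLT_map_erase_union {α β : Type*} [DecidableEq α] [Preorder β]
    (r : α → β) {s t : Finset α} {a : α} (ha : a ∈ s) (ht : ∀ b ∈ t, r b < r a) :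
    Multiset.IsDershowitzMannaLT ((s.erase a ∪ t).val.map r) (s.val.map r) := by
  refine ⟨(s.erase a).val.map r, (t \ s.erase a).val.map r, {r a}, by simp, ?_, ?_, ?_⟩
  · rw [← Multiset.map_add, ← Finset.union_sdiff_self_eq_union,
      ← Finset.disjUnion_eq_union _ _ Finset.disjoint_sdiff, Finset.disjUnion_val]
  · rw [← Multiset.map_singleton, ← Multiset.map_add, Finset.erase_val, add_comm,
      Multiset.singleton_add, Multiset.cons_erase ha]
  · intro y hy
    obtain ⟨b, hb, rfl⟩ := Multiset.mem_map.1 hy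
    exact ⟨r a, Multiset.mem_singleton_self _, ht b (Finset.mem_sdiff.1 hb).1⟩

namespace Trm

theorem induction_on {P : Trm → Prop} (t : Trm) (var : ∀ x, P (var x))
    (fn : ∀ f ts, (∀ t ∈ ts, P t) → P (fn f ts)) : P t :=
  Trm.rec (motive_1 := P) (motive_2 := fun ts => ∀ t ∈ ts, P t) var fn
    (List.forall_mem_nil P) (fun _ _ ht hts => List.forall_mem_cons.2 ⟨ht, hts⟩) t

theorem exists_eq_fn {t : Trm} (h : ∀ x, t ≠ var x) : ∃ f ts, t = fn f ts := by
  cases t with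
  | var x => exact absurd rfl (h x)
  | fn f ts => exact ⟨f, ts, rfl⟩

theorem size_fn (f : ℕ) (ts : List Trm) : (fn f ts).size = 1 + (ts.map size).sum := by
  rw [size]
  simp

theorem size_pos (t : Trm) : 0 < t.size := by
  cases t with
  | var x => simp [size]
  | fn f ts => simp [size_fn]

theorem size_lt_size_fn {f : ℕ} {ts : List Trm} {t : Trm} (h : t ∈ ts) :
    t.size < (fn f ts).size := by
  rw [size_fn, Nat.lt_one_add_iff]
  exact List.le_sum_of_mem (List.mem_map_of_mem h)

theorem subst_fn (σ : ℕ → Trm) (f : ℕ) (ts : List Trm) :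
    (fn f ts).subst σ = fn f (ts.map (subst σ)) := by
  rw [subst]
  simp

end Trm

section Variables

theorem varSet_var (x : ℕ) : varSet (.var x) = {x} := by
  ext y
  exact ⟨fun | .var => rfl, fun h => h ▸ .var⟩

theorem varSet_fn (f : ℕ) (ts : List Trm) : varSet (.fn f ts) = ⋃ t ∈ ts, varSet t := by
  ext x
  simp only [Set.mem_iUnion, exists_prop]
  exact ⟨fun | .fn ht hx => ⟨_, ht, hx⟩, fun ⟨_, ht, hx⟩ => .fn ht hx⟩

theorem finite_varSet (t : Trm) : (varSet t).Finite := by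
  induction t using Trm.induction_on with
  | var x => simp only [varSet_var, Set.finite_singleton]
  | fn f ts ih =>
    rw [varSet_fn]
    exact (List.finite_toSet ts).biUnion ih

theorem varSet_subst (σ : ℕ → Trm) (t : Trm) :
    varSet (t.subst σ) = ⋃ x ∈ varSet t, varSet (σ x) := by
  induction t using Trm.induction_on with
  | var x => simp [Trm.subst, varSet_var]
  | fn f ts ih =>
    ext y
    simp +contextual [Trm.subst_fn, varSet_fn, ih]

theorem varSet_subst_single_subset (a : ℕ) (t s : Trm) :
    varSet (s.subst (single a t)) ⊆ varSet s \ {a} ∪ varSet t := by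
  rw [varSet_subst]
  refine Set.iUnion₂_subset fun x hx => ?_
  by_cases hxa : x = a
  · simp [single, hxa]
  · simp [single, hxa, varSet_var, hx]

/-- The variables occurring in the equation `e`, on either side. -/
def eqVars (e : Trm × Trm) : Set ℕ := varSet e.1 ∪ varSet e.2

theorem finite_eqVars (e : Trm × Trm) : (eqVars e).Finite :=
  (finite_varSet e.1).union (finite_varSet e.2)

theorem eqVars_subst_single_subset (a : ℕ) (t : Trm) (e : Trm × Trm) :
    eqVars (e.1.subst (single a t), e.2.subst (single a t)) ⊆ eqVars e \ {a} ∪ varSet t := by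
  refine (Set.union_subset_union (varSet_subst_single_subset a t e.1)
    (varSet_subst_single_subset a t e.2)).trans_eq ?_
  rw [← Set.union_union_distrib_right, ← Set.union_sdiff_distrib]
  rfl

theorem eqVars_subset_of_mem_zip {f g : ℕ} {ss ts : List Trm} {e : Trm × Trm}
    (he : e ∈ ss.zip ts) : eqVars e ⊆ eqVars (.fn f ss, .fn g ts) := by
  obtain ⟨hs, ht⟩ := List.of_mem_zip he
  simp only [eqVars, varSet_fn]
  exact Set.union_subset_union (Set.subset_biUnion_of_mem (u := varSet) hs)
    (Set.subset_biUnion_of_mem (u := varSet) ht)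

/-- The variable `x` is eliminated in `E`: it occurs in no equation of `E`, or only in a single one,
of the form `x ≐ y`. Action (5a) brings its variable `X` into this state, and no action
undoes it. -/
def IsEliminated (E : EqSet) (x : ℕ) : Prop :=
  ∃ y, ∀ e ∈ E, x ∈ eqVars e → e = (.var x, .var y)

/-- The variables that are not eliminated in `E`. Their number is the first component of the
termination measure. -/
def activeVars (E : EqSet) : Set ℕ := {x | ¬ IsEliminated E x}

variable {E F S : EqSet} {e : Trm × Trm}

theorem finite_activeVars (hE : E.Finite) : (activeVars E).Finite := by
  refine (hE.biUnion fun e _ => finite_eqVars e).subset fun x hx => ?_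
  by_contra hxE
  exact hx ⟨x, fun e he hxe => absurd (Set.mem_biUnion he hxe) hxE⟩

theorem eqVars_subset_activeVars (he : e ∈ E) (hvar : ∀ x y, e ≠ (.var x, .var y)) :
    eqVars e ⊆ activeVars E :=
  fun _ hx ⟨_, hE⟩ => hvar _ _ (hE e he hx)

theorem activeVars_union_subset (hF : F ⊆ E) (hS : ∀ e ∈ S, eqVars e ⊆ activeVars E) :
    activeVars (F ∪ S) ⊆ activeVars E := by
  rintro x hx ⟨y, hE⟩
  refine hx ⟨y, ?_⟩
  rintro e (he | he) hxe
  · exact hE e (hF he) hxe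
  · exact absurd ⟨y, hE⟩ (hS e he hxe)

/-- The result of action (5a) on the equation `a ≐ b` of `E`. -/
def elimVar (E : EqSet) (a b : ℕ) : EqSet :=
  {(.var a, .var b)} ∪ substE (single a (.var b)) (E \ {(.var a, .var b)})

variable {a b : ℕ}

theorem isEliminated_elimVar_self (hab : a ≠ b) : IsEliminated (elimVar E a b) a := by
  refine ⟨b, ?_⟩
  rintro _ (he | ⟨e, -, rfl⟩) ha
  · exact he
  · have := eqVars_subst_single_subset a (.var b) e ha
    simp [varSet_var, hab] at this

theorem IsEliminated.elimVar_of_ne {x : ℕ} (hx : IsEliminated E x) (hmem : (.var a, .var b) ∈ E)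
    (hxa : x ≠ a) : IsEliminated (elimVar E a b) x := by
  obtain ⟨y, hE⟩ := hx
  have hab : x ∉ eqVars (.var a, .var b) := fun h => by
    have := hE _ hmem h
    simp only [Prod.mk.injEq, Trm.var.injEq] at this
    exact hxa this.1.symm
  have hxb : x ≠ b := by
    rintro rfl
    simp [eqVars, varSet_var] at hab
  refine ⟨if y = a then b else y, ?_⟩
  rintro _ (rfl | ⟨e, he, rfl⟩) hxe
  · exact absurd hxe hab
  · have hxe' : x ∈ eqVars e := by
      have := eqVars_subst_single_subset a (.var b) e hxe
      simp only [varSet_var, Set.mem_union, Set.mem_singleton_iff, hxb, or_false] at this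
      exact this.1
    obtain rfl := hE e he.1 hxe'
    simp only [Trm.subst, single, if_neg hxa]
    split_ifs <;> rfl

theorem activeVars_elimVar_ssubset (hmem : (.var a, .var b) ∈ E) (hab : a ≠ b)
    (hocc : ∃ e ∈ E \ {(.var a, .var b)}, a ∈ eqVars e) :
    activeVars (elimVar E a b) ⊂ activeVars E := by
  have ha : a ∈ activeVars E := by
    rintro ⟨y, hE⟩
    obtain ⟨e, he, hae⟩ := hocc
    have hae' := hE _ hmem (Or.inl .var)
    exact he.2 ((hE e he.1 hae).trans hae'.symm)
  have hsub : activeVars (elimVar E a b) ⊆ activeVars E := fun x hx hxE =>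
    hx (hxE.elimVar_of_ne hmem fun hxa => ha (hxa ▸ hxE))
  exact hsub.ssubset_of_mem_notMem ha fun h => h (isEliminated_elimVar_self hab)

end Variables

/-- The orientation of an equation: `X ≐ t` is lighter than `t ≐ X`, for non-variable `t`, and
an equation with no variable side is lighter than both. -/
def eqOrientation : Trm × Trm → ℕ
  | (.var _, .fn _ _) => 1
  | (.fn _ _, .var _) => 2
  | _ => 0

/-- The rank of an equation, compared lexicographically: the size of its larger side, which
decomposition decreases, then its orientation, which actions (4) and (5b) decrease. -/
def eqRank (e : Trm × Trm) : ℕ ×ₗ ℕ := toLex (max e.1.size e.2.size, eqOrientation e)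

theorem eqRank_lt_of_mem_zip {f g : ℕ} {ss ts : List Trm} {e : Trm × Trm} (he : e ∈ ss.zip ts) :
    eqRank e < eqRank (.fn f ss, .fn g ts) := by
  obtain ⟨hs, ht⟩ := List.of_mem_zip he
  exact Prod.Lex.toLex_lt_toLex.2
    (Or.inl (max_lt_max (Trm.size_lt_size_fn hs) (Trm.size_lt_size_fn ht)))

theorem eqRank_var_left_lt {t : Trm} (ht : ∀ y, t ≠ .var y) (x : ℕ) :
    eqRank (.var x, t) < eqRank (t, .var x) := by
  obtain ⟨f, ts, rfl⟩ := Trm.exists_eq_fn ht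
  exact Prod.Lex.toLex_lt_toLex.2 (Or.inr ⟨max_comm _ _, one_lt_two⟩)

theorem eqRank_lt_var_left {t u : Trm} (ht : ∀ y, t ≠ .var y) (hu : ∀ y, u ≠ .var y)
    (htu : t.size ≤ u.size) (x : ℕ) : eqRank (t, u) < eqRank (.var x, u) := by
  obtain ⟨f, ts, rfl⟩ := Trm.exists_eq_fn ht
  obtain ⟨g, us, rfl⟩ := Trm.exists_eq_fn hu
  refine Prod.Lex.toLex_lt_toLex.2 (Or.inr ⟨?_, zero_lt_one⟩)
  have hx : (Trm.var x).size ≤ (Trm.fn g us).size := by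
    rw [Trm.size]
    exact Trm.size_pos _
  exact (max_eq_right htu).trans (max_eq_right hx).symm

/-- The multiset of the ranks of the equations of a finite equation set, the second component of the
termination measure. -/
noncomputable def ranks {E : EqSet} (hE : E.Finite) : Multiset (ℕ ×ₗ ℕ) :=
  hE.toFinset.val.map eqRank

/-- `F` arises from `E` by replacing one equation by equations of smaller rank whose variables are
active in `E`: the common form of all actions other than (5a). -/
def IsReplacement (E F : EqSet) : Prop :=
  ∃ e ∈ E, ∃ S : EqSet, F = E \ {e} ∪ S ∧
    ∀ e' ∈ S, eqVars e' ⊆ activeVars E ∧ eqRank e' < eqRank e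

theorem IsReplacement.activeVars_subset {E F : EqSet} (h : IsReplacement E F) :
    activeVars F ⊆ activeVars E := by
  obtain ⟨e, -, S, rfl, hS⟩ := h
  exact activeVars_union_subset Set.sdiff_subset fun e' he' => (hS e' he').1

theorem IsReplacement.isDershowitzMannaLT_ranks {E F : EqSet} (h : IsReplacement E F)
    (hE : E.Finite) (hF : F.Finite) : Multiset.IsDershowitzMannaLT (ranks hF) (ranks hE) := by
  classical
  obtain ⟨e, he, S, rfl, hS⟩ := h
  have hSfin : S.Finite := hF.subset Set.subset_union_right
  have hF_eq : hF.toFinset = hE.toFinset.erase e ∪ hSfin.toFinset := by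
    ext
    simp [and_comm]
  rw [ranks, hF_eq]
  exact isDershowitzMannaLT_map_erase_union eqRank (hE.mem_toFinset.2 he)
    fun e' he' => (hS e' (hSfin.mem_toFinset.1 he')).2

theorem MMAmStep.isReplacement_or_activeVars_ssubset {E F : EqSet} (h : MMAmStep E F) :
    IsReplacement E F ∨ activeVars F ⊂ activeVars E := by
  cases h with
  | decomp hmem _ =>
    refine Or.inl ⟨_, hmem, _, rfl, fun e he => ⟨?_, eqRank_lt_of_mem_zip he⟩⟩
    exact (eqVars_subset_of_mem_zip he).trans (eqVars_subset_activeVars hmem (by simp))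
  | delete hmem => exact Or.inl ⟨_, hmem, ∅, (Set.union_empty _).symm, by simp⟩
  | @flip t x hmem ht =>
    refine Or.inl ⟨_, hmem, _, rfl, ?_⟩
    rintro _ rfl
    have hvars : eqVars (.var x, t) = eqVars (t, .var x) := Set.union_comm _ _
    exact ⟨hvars ▸ eqVars_subset_activeVars hmem (by simp [ht]), eqRank_var_left_lt ht x⟩
  | elimVar hmem hne hocc => exact Or.inr (activeVars_elimVar_ssubset hmem hne hocc)
  | @merge x t u ht hu _ htv huv hsize =>
    refine Or.inl ⟨_, hu, _, rfl, ?_⟩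
    rintro _ rfl
    have ht_active := eqVars_subset_activeVars ht (by simp [htv])
    have hu_active := eqVars_subset_activeVars hu (by simp [huv])
    exact ⟨Set.union_subset (Set.subset_union_right.trans ht_active)
      (Set.subset_union_right.trans hu_active), eqRank_lt_var_left htv huv hsize x⟩

theorem wellFounded_mmamStep :
    WellFounded fun F E : {E : EqSet // E.Finite} => MMAmStep E.1 F.1 := by
  let measure (E : {E : EqSet // E.Finite}) : ℕ × Multiset (ℕ ×ₗ ℕ) :=
    ((activeVars E.1).ncard, ranks E.2)
  have hwf : WellFounded (Prod.Lex (· < ·) Multiset.IsDershowitzMannaLT) :=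
    (wellFounded_lt (α := ℕ)).prod_lex
      (Multiset.wellFounded_isDershowitzMannaLT (α := ℕ ×ₗ ℕ))
  refine Subrelation.wf (fun {F E} hstep => ?_) (InvImage.wf measure hwf)
  have hE := finite_activeVars E.2
  refine Prod.lex_def.2 ?_
  rcases hstep.isReplacement_or_activeVars_ssubset with hrepl | hlt
  · have hle := Set.ncard_le_ncard hrepl.activeVars_subset hE
    exact hle.lt_or_eq.imp_right fun heq => ⟨heq, hrepl.isDershowitzMannaLT_ranks E.2 F.2⟩
  · exact Or.inl (Set.ncard_lt_ncard hlt hE)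

/-- There is no infinite sequence `E0, E1, E2, …` of finite equation sets such
that for every `i`, `E_{i+1}` is obtained from `E_i` by an action of MMA⁻;
i.e. MMA⁻ terminates on every finite input equation set. -/
theorem stmt7 :
    ¬ ∃ Es : ℕ → EqSet,
        (∀ i, (Es i).Finite) ∧ (∀ i, MMAmStep (Es i) (Es (i + 1))) := by
  rintro ⟨Es, hfin, hstep⟩
  exact (wellFounded_iff_isEmpty_descending_chain.1 wellFounded_mmamStep).false
    ⟨fun i => ⟨Es i, hfin i⟩, hstep⟩
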